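/- arXiv:2601.00641 — 3 statements merged into one kernel-verified Lean document; each statement's English description precedes it below -/
import Mathlib

section
/- Suppose p > 0, q⁺⁺ > 1/2, and 0 < q⁻⁺ < 1/2, and let the hallucination-selection probability be h(K) = ((1-p)·q⁻⁺·Q⁻⁺(K)) / (p·q⁺⁺·Q⁺⁺(K) + (1-p)·q⁻⁺·Q⁻⁺(K)), where Q⁻⁺(K) ≤ exp(-2K·(1/2 - q⁻⁺)^2) and Q⁺⁺(K) ≥ 1 - exp(-2K·(q⁺⁺ - 1/2)^2). Then h(K) ≤ ((1-p)·q⁻⁺ / (p·q⁺⁺·Q⁺⁺(K)))·exp(-2K·(1/2 - q⁻⁺)^2), and h(K) → 0 exponentially fast as K → ∞. -/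
/-- Pointwise bound on `x / (y + x)` with `x = a * Q`, `y = b`. -/
lemma ratio_le (a b Q e : ℝ) (ha : 0 ≤ a) (hb : 0 < b) (hQ : 0 ≤ Q) (he : Q ≤ e) :
    a * Q / (b + a * Q) ≤ a / b * e := by
  have haQ : 0 ≤ a * Q := mul_nonneg ha hQ
  calc a * Q / (b + a * Q) ≤ a * Q / b :=
        div_le_div_of_nonneg_left haQ hb (by linarith)
    _ = a / b * Q := by ring
    _ ≤ a / b * e := mul_le_mul_of_nonneg_left he (div_nonneg ha hb.le)

/-- The explicit exponential rate: for `K ≥ 1`, the denominator rate is bounded below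
uniformly, so the upper bound is `C * exp (-2 K c)` with `C` independent of `K`. -/
lemma exp_rate (a b s c : ℝ) (ha : 0 ≤ a) (hb : 0 < b) (hs : 0 < s) (Q h : ℕ → ℝ)
    (hQ : ∀ K : ℕ, 1 - Real.exp (-2 * K * s) ≤ Q K)
    (hh : ∀ K : ℕ, h K ≤ a / (b * Q K) * Real.exp (-2 * K * c)) :
    ∀ K : ℕ, 1 ≤ K →
      h K ≤ a / (b * (1 - Real.exp (-2 * s))) * Real.exp (-2 * K * c) := by
  intro K hK
  have hK' : (1 : ℝ) ≤ K := by exact_mod_cast hK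
  have hd : 0 < 1 - Real.exp (-2 * s) := by
    have : Real.exp (-2 * s) < 1 := Real.exp_lt_one_iff.mpr (by linarith)
    linarith
  have hdQ : 1 - Real.exp (-2 * s) ≤ Q K := by
    have : Real.exp (-2 * K * s) ≤ Real.exp (-2 * s) :=
      Real.exp_le_exp.mpr (by nlinarith)
    linarith [hQ K]
  refine (hh K).trans (mul_le_mul_of_nonneg_right ?_ (Real.exp_pos _).le)
  exact div_le_div_of_nonneg_left ha (mul_pos hb hd) (mul_le_mul_of_nonneg_left hdQ hb.le)

/-- Suppose `p > 0`, `q⁺⁺ > 1/2`, `0 < q⁻⁺ < 1/2`, and the ensemble rates satisfy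
the Hoeffding bounds `Q⁻⁺(K) ≤ exp(-2K(1/2-q⁻⁺)²)` and
`Q⁺⁺(K) ≥ 1 - exp(-2K(q⁺⁺-1/2)²)`.  Then the hallucination-selection probability
`h(K) = ((1-p)·q⁻⁺·Q⁻⁺(K)) / (p·q⁺⁺·Q⁺⁺(K) + (1-p)·q⁻⁺·Q⁻⁺(K))` satisfies
`h(K) ≤ ((1-p)·q⁻⁺ / (p·q⁺⁺·Q⁺⁺(K)))·exp(-2K(1/2-q⁻⁺)²)` and `h(K) → 0` as
`K → ∞`. -/
theorem stmt_14 (p qpp qmp : ℝ)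
    (hp0 : 0 < p) (hp1 : p ≤ 1)
    (hqpp : 1 / 2 < qpp) (hqpp1 : qpp ≤ 1)
    (hqmp0 : 0 < qmp) (hqmp : qmp < 1 / 2)
    (Qpp Qmp : ℕ → ℝ)
    (hQpp_pos : ∀ K, 0 < Qpp K)
    (hQmp_nonneg : ∀ K, 0 ≤ Qmp K)
    (hQpp_bound : ∀ K : ℕ, 1 - Real.exp (-2 * K * (qpp - 1 / 2) ^ 2) ≤ Qpp K)
    (hQmp_bound : ∀ K : ℕ, Qmp K ≤ Real.exp (-2 * K * (1 / 2 - qmp) ^ 2))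
    (h : ℕ → ℝ)
    (hdef : ∀ K, h K =
      ((1 - p) * qmp * Qmp K) / (p * qpp * Qpp K + (1 - p) * qmp * Qmp K)) :
    (∀ K : ℕ, h K ≤
        ((1 - p) * qmp / (p * qpp * Qpp K)) * Real.exp (-2 * K * (1 / 2 - qmp) ^ 2)) ∧
      Filter.Tendsto h Filter.atTop (nhds 0) := by
  have ha : 0 ≤ (1 - p) * qmp := mul_nonneg (by linarith) hqmp0.le
  have hb : 0 < p * qpp := mul_pos hp0 (by linarith)
  have hs : 0 < (qpp - 1 / 2) ^ 2 := pow_pos (by linarith) 2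
  have hc : 0 < (1 / 2 - qmp) ^ 2 := pow_pos (by linarith) 2
  have h1 : ∀ K : ℕ, h K ≤
      ((1 - p) * qmp / (p * qpp * Qpp K)) * Real.exp (-2 * K * (1 / 2 - qmp) ^ 2) := by
    intro K
    rw [hdef K]
    exact ratio_le _ _ _ _ ha (mul_pos hb (hQpp_pos K)) (hQmp_nonneg K) (hQmp_bound K)
  refine ⟨h1, ?_⟩
  have h2 := exp_rate _ _ _ _ ha hb hs Qpp h hQpp_bound h1
  have h0 : ∀ K, 0 ≤ h K := by
    intro K
    rw [hdef K]
    have hx := mul_nonneg ha (hQmp_nonneg K)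
    exact div_nonneg hx (add_nonneg (mul_pos hb (hQpp_pos K)).le hx)
  have hexp : Filter.Tendsto (fun K : ℕ => Real.exp (-2 * K * (1 / 2 - qmp) ^ 2))
      Filter.atTop (nhds 0) := by
    have hr : Real.exp (-2 * (1 / 2 - qmp) ^ 2) < 1 := Real.exp_lt_one_iff.mpr (by linarith)
    refine (tendsto_pow_atTop_nhds_zero_of_lt_one (Real.exp_pos _).le hr).congr ?_
    intro K
    rw [← Real.exp_nat_mul]
    congr 1
    ring
  have hlim := hexp.const_mul
    ((1 - p) * qmp / (p * qpp * (1 - Real.exp (-2 * (qpp - 1 / 2) ^ 2))))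
  rw [mul_zero] at hlim
  refine tendsto_of_tendsto_of_tendsto_of_le_of_le' tendsto_const_nhds hlim
    (Filter.Eventually.of_forall h0) ?_
  filter_upwards [Filter.eventually_ge_atTop 1] with K hK
  exact h2 K hK
end

section
/- Combining the pipeline-failure bound and the Hoeffding judge bounds: under run-correctness probability p > 0, base judge rates q⁺⁺ > 1/2 and q⁻⁺ < 1/2, for every ε > 0 there exist N and K such that both the pipeline-failure probability (1 - (p·q⁺⁺ + (1-p)·q⁻⁺))^N < ε and the conditional hallucination-selection probability ((1-p)·q⁻⁺·Q⁻⁺(K)) / (p·q⁺⁺·Q⁺⁺(K) + (1-p)·q⁻⁺·Q⁻⁺(K)) < ε; hence any specific task with non-zero per-run success probability can be solved to arbitrarily high reliability. -/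
theorem exp_decay_eventually (c δ : ℝ) (hc : 0 < c) (hδ : 0 < δ) :
    ∀ᶠ K : ℕ in Filter.atTop, Real.exp (-2 * K * c ^ 2) < δ := by
  have h1 : Filter.Tendsto (fun K : ℕ => (2 * c ^ 2) * (K : ℝ)) Filter.atTop Filter.atTop :=
    Filter.Tendsto.const_mul_atTop (by positivity) tendsto_natCast_atTop_atTop
  have h2 := Real.tendsto_exp_neg_atTop_nhds_zero.comp h1
  filter_upwards [h2.eventually (gt_mem_nhds hδ)] with K hK
  have e : (-2 * (K : ℝ) * c ^ 2) = -(2 * c ^ 2 * (K : ℝ)) := by ring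
  rw [e]
  exact hK

/-- Combining the pipeline-failure bound and the Hoeffding judge bounds: under
run-correctness probability `p > 0`, base judge rates `q⁺⁺ > 1/2` and `q⁻⁺ < 1/2`,
for every `ε > 0` there exist `N` and `K` such that both the pipeline-failure
probability `(1 - (p·q⁺⁺ + (1-p)·q⁻⁺))^N < ε` and the conditional
hallucination-selection probability
`((1-p)·q⁻⁺·Q⁻⁺(K)) / (p·q⁺⁺·Q⁺⁺(K) + (1-p)·q⁻⁺·Q⁻⁺(K)) < ε`: any specific task
with non-zero per-run success probability can be solved to arbitrarily high
reliability. -/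
theorem stmt_16 (p qpp qmp : ℝ)
    (hp0 : 0 < p) (hp1 : p ≤ 1)
    (hqpp : 1 / 2 < qpp) (hqpp1 : qpp ≤ 1)
    (hqmp0 : 0 ≤ qmp) (hqmp : qmp < 1 / 2)
    (Qpp Qmp : ℕ → ℝ)
    (hQmp_nonneg : ∀ K, 0 ≤ Qmp K)
    (hQpp_bound : ∀ K : ℕ, 1 - Real.exp (-2 * K * (qpp - 1 / 2) ^ 2) ≤ Qpp K)
    (hQmp_bound : ∀ K : ℕ, Qmp K ≤ Real.exp (-2 * K * (1 / 2 - qmp) ^ 2))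
    (ε : ℝ) (hε : 0 < ε) :
    ∃ N K : ℕ,
      (1 - (p * qpp + (1 - p) * qmp)) ^ N < ε ∧
      ((1 - p) * qmp * Qmp K) / (p * qpp * Qpp K + (1 - p) * qmp * Qmp K) < ε := by
  have hpq : 0 < p * qpp := mul_pos hp0 (by linarith)
  have hr : 0 ≤ (1 - p) * qmp := mul_nonneg (by linarith) hqmp0
  have hr1 : (1 - p) * qmp ≤ 1 := by nlinarith
  have hb0 : 0 ≤ 1 - (p * qpp + (1 - p) * qmp) := by nlinarith
  obtain ⟨N, hN⟩ := exists_pow_lt_of_lt_one hε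
    (show 1 - (p * qpp + (1 - p) * qmp) < 1 by linarith)
  obtain ⟨K, hK1, hK2⟩ := ((exp_decay_eventually (qpp - 1 / 2) (1 / 2) (by linarith)
    (by norm_num)).and (exp_decay_eventually (1 / 2 - qmp) (ε * (p * qpp) / 2) (by linarith)
    (by positivity))).exists
  refine ⟨N, K, hN, ?_⟩
  have hQ : 1 / 2 < Qpp K := by linarith [hQpp_bound K]
  have hM : Qmp K < ε * (p * qpp) / 2 := lt_of_le_of_lt (hQmp_bound K) hK2
  have hA0 : 0 ≤ (1 - p) * qmp * Qmp K := mul_nonneg hr (hQmp_nonneg K)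
  have hA1 : (1 - p) * qmp * Qmp K ≤ Qmp K := mul_le_of_le_one_left (hQmp_nonneg K) hr1
  have hP : 0 < p * qpp * Qpp K := mul_pos hpq (by linarith)
  rw [div_lt_iff₀ (by linarith)]
  have h3 : ε * (p * qpp) * (1 / 2) ≤ ε * (p * qpp) * Qpp K :=
    mul_le_mul_of_nonneg_left hQ.le (by positivity)
  have h4 : 0 ≤ ε * ((1 - p) * qmp * Qmp K) := mul_nonneg hε.le hA0
  linarith
end

section
/- For K i.i.d. Bernoulli(q) votes with q < 1/2 and K odd, the majority-acceptance probability Σ_{i=(K+1)/2}^{K} C(K,i)·q^i·(1-q)^{K-i} is strictly less than q for all K ≥ 3; that is, an odd majority vote of K ≥ 3 better-than-random judges has a strictly smaller false-positive rate than a single judge. -/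
/-- For `K` i.i.d. Bernoulli(`q`) votes with `0 < q < 1/2` and `K` odd, the
majority-acceptance probability `∑_{i=(K+1)/2}^{K} C(K,i)·q^i·(1-q)^{K-i}` is strictly
less than `q` for all `K ≥ 3`: an odd majority vote of `K ≥ 3` better-than-random
judges has a strictly smaller false-positive rate than a single judge. -/
theorem stmt_18 (q : ℝ) (hq0 : 0 < q) (hq : q < 1 / 2) (K : ℕ) (hodd : Odd K)
    (hK : 3 ≤ K) :
    ∑ i ∈ Finset.Icc ((K + 1) / 2) K, (K.choose i : ℝ) * q ^ i * (1 - q) ^ (K - i)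
      < q := by
  obtain ⟨m, rfl⟩ := hodd
  have hm : 1 ≤ m := by omega
  set p : ℝ := 1 - q with hp
  have hqp : q < p := by rw [hp]; linarith
  have hp0 : 0 < p := by linarith
  have h1 : (2 * m + 1 + 1) / 2 = m + 1 := by omega
  rw [h1]
  -- reflect the lower half of the binomial expansion onto the upper half
  have htot : ∑ i ∈ Finset.Icc (m + 1) (2 * m + 1),
        ((2 * m + 1).choose i : ℝ) * q ^ i * p ^ (2 * m + 1 - i)
      + ∑ i ∈ Finset.Icc (m + 1) (2 * m + 1),
        ((2 * m + 1).choose i : ℝ) * q ^ (2 * m + 1 - i) * p ^ i = 1 := by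
    have hb := add_pow q p (2 * m + 1)
    have hqp1 : q + p = 1 := by rw [hp]; ring
    rw [hqp1, one_pow] at hb
    have hr : ∑ i ∈ Finset.Icc (m + 1) (2 * m + 1),
        ((2 * m + 1).choose i : ℝ) * q ^ (2 * m + 1 - i) * p ^ i
        = ∑ i ∈ Finset.range (m + 1),
        ((2 * m + 1).choose i : ℝ) * q ^ i * p ^ (2 * m + 1 - i) := by
      refine Finset.sum_nbij' (fun i => 2 * m + 1 - i) (fun i => 2 * m + 1 - i) ?_ ?_ ?_ ?_ ?_
      · intro i hi; simp only [Finset.mem_Icc, Finset.mem_range] at *; omega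
      · intro i hi; simp only [Finset.mem_Icc, Finset.mem_range] at *; omega
      · intro i hi; simp only [Finset.mem_Icc] at *; omega
      · intro i hi; simp only [Finset.mem_range] at *; omega
      · intro i hi
        simp only [Finset.mem_Icc] at hi
        rw [Nat.choose_symm hi.2, Nat.sub_sub_self hi.2]
    have hI : Finset.Icc (m + 1) (2 * m + 1) = Finset.Ico (m + 1) (2 * m + 1 + 1) := by
      ext i; simp only [Finset.mem_Icc, Finset.mem_Ico]; omega
    rw [hr, hI, add_comm, Finset.sum_range_add_sum_Ico _ (by omega), hb]
    exact Finset.sum_congr rfl fun i _ => by ring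
  -- termwise comparison
  have hlt : (∑ i ∈ Finset.Icc (m + 1) (2 * m + 1),
        ((2 * m + 1).choose i : ℝ) * q ^ i * p ^ (2 * m + 1 - i)) * p
      < (∑ i ∈ Finset.Icc (m + 1) (2 * m + 1),
        ((2 * m + 1).choose i : ℝ) * q ^ (2 * m + 1 - i) * p ^ i) * q := by
    rw [Finset.sum_mul, Finset.sum_mul]
    have key : ∀ a d : ℕ, q ^ (a + 1 + d) * p ^ a * p = (q * p) ^ (a + 1) * q ^ d ∧
        q ^ a * p ^ (a + 1 + d) * q = (q * p) ^ (a + 1) * p ^ d := by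
      intro a d; constructor <;> ring
    apply Finset.sum_lt_sum
    · intro i hi
      simp only [Finset.mem_Icc] at hi
      obtain ⟨a, ha⟩ : ∃ a, a = 2 * m + 1 - i := ⟨_, rfl⟩
      obtain ⟨d, hd⟩ : ∃ d, i = a + 1 + d := ⟨i - (a + 1), by omega⟩
      rw [← ha]
      rw [mul_assoc, mul_assoc, mul_assoc, mul_assoc, ← mul_assoc (q ^ i), ← mul_assoc (q ^ a)]
      apply mul_le_mul_of_nonneg_left _ (Nat.cast_nonneg _)
      rw [hd, (key a d).1, (key a d).2]
      gcongr
    · refine ⟨2 * m + 1, by simp only [Finset.mem_Icc]; omega, ?_⟩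
      have := key 0 (2 * m)
      have h2 : q ^ (2 * m) < p ^ (2 * m) := pow_lt_pow_left₀ hqp hq0.le (by omega)
      have h3 := mul_lt_mul_of_pos_left h2 (mul_pos hq0 hp0)
      simp only [Nat.choose_self, Nat.sub_self, pow_zero, Nat.cast_one]
      rw [pow_succ, pow_succ]
      linarith
  have hpq : p = 1 - q := hp
  clear_value p
  generalize (∑ i ∈ Finset.Icc (m + 1) (2 * m + 1),
        ((2 * m + 1).choose i : ℝ) * q ^ i * p ^ (2 * m + 1 - i)) = S at *
  generalize (∑ i ∈ Finset.Icc (m + 1) (2 * m + 1),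
        ((2 * m + 1).choose i : ℝ) * q ^ (2 * m + 1 - i) * p ^ i) = T at *
  have hT : T = 1 - S := by linarith
  subst hT
  rw [hpq] at hlt
  linarith
end
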